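/- There exists an absolute constant C ≥ 1 such that for all t ∈ ℝ and all Schwartz functions f : ℝ → ℂ: ‖ ⟨·⟩^{-2} (∂_x/⟨∇⟩) e^{±it⟨∇⟩} ( ⟨·⟩^{-2} f ) ‖_{L²(ℝ)} ≤ C ⟨t⟩^{-3/2} ‖f‖_{L²(ℝ)}. -/

import Mathlib

open MeasureTheory

/-- Fourier transform with the convention `ĥ(ξ) = (2π)^{-1/2} ∫ e^{-ixξ} h(x) dx`. -/
noncomputable def FT (h : ℝ → ℂ) (ξ : ℝ) : ℂ :=
  (Real.sqrt (2 * Real.pi) : ℂ)⁻¹ * ∫ x : ℝ, Complex.exp (-(Complex.I * x * ξ)) * h x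

/-- Inverse Fourier transform `(2π)^{-1/2} ∫ e^{+ixξ} h(ξ) dξ`. -/
noncomputable def IFT (h : ℝ → ℂ) (x : ℝ) : ℂ :=
  (Real.sqrt (2 * Real.pi) : ℂ)⁻¹ * ∫ ξ : ℝ, Complex.exp (Complex.I * x * ξ) * h ξ

/-- Japanese bracket `⟨x⟩ = (1+x²)^{1/2}`. -/
noncomputable def jap (x : ℝ) : ℝ := Real.sqrt (1 + x ^ 2)

/-- Fourier multiplier operator with symbol `m`: `m(D)h = ℱ^{-1}(m(ξ) ĥ(ξ))`. -/
noncomputable def Mop (m : ℝ → ℂ) (h : ℝ → ℂ) : ℝ → ℂ :=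
  IFT (fun ξ => m ξ * FT h ξ)

/-- The `L²(ℝ)` norm. -/
noncomputable def L2C (h : ℝ → ℂ) : ℝ := Real.sqrt (∫ x : ℝ, ‖h x‖ ^ 2)

/-!
Write `a = ±t`. The symbol `(iξ/⟨ξ⟩) e^{ia⟨ξ⟩}` is `a⁻¹` times the second derivative of
`W(ξ) = ∫₀^ξ e^{ia⟨s⟩} ds`. A derivative falling on a symbol is, up to a factor `i`, the commutator
of the multiplier with multiplication by `x`, so the two derivatives cost two powers of `x`, which
the weights `⟨x⟩⁻²` on both sides absorb; the operator norm is thus `O(|a|⁻¹ ‖W‖_∞)`. The phase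
`⟨s⟩` has a nondegenerate critical point at `0`, so van der Corput's argument away from
`|s| ≤ |a|^{-1/2}` gives `‖W‖_∞ = O(|a|^{-1/2})`. For `|a| ≤ 1` Plancherel's theorem suffices.
-/

open Complex Function Set SchwartzMap
open scoped SchwartzMap FourierTransform LineDeriv

section TemperateGrowth

variable {E F : Type*} [NormedAddCommGroup E] [NormedSpace ℝ E]
  [NormedAddCommGroup F] [NormedSpace ℝ F]

theorem hasTemperateGrowth_lineDeriv {f : E → F} (hf : f.HasTemperateGrowth) (v : E) :
    (fun x => lineDeriv ℝ f x v).HasTemperateGrowth := by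
  have hfderiv : (fderiv ℝ f).HasTemperateGrowth := by
    refine ⟨hf.1.fderiv_right (by simp), fun n => ?_⟩
    simpa only [norm_iteratedFDeriv_fderiv] using hf.2 (n + 1)
  have hline : (fun x => lineDeriv ℝ f x v) = fun x => fderiv ℝ f x v :=
    funext fun x => (hf.1.differentiable (by simp) x).lineDeriv_eq_fderiv
  rw [hline]
  exact (ContinuousLinearMap.apply ℝ F v).hasTemperateGrowth.comp hfderiv

theorem lineDeriv_one (f : ℝ → F) (x : ℝ) : lineDeriv ℝ f x 1 = deriv f x := by
  simp [lineDeriv, deriv_comp_const_add]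

theorem hasTemperateGrowth_deriv {f : ℝ → F} (hf : f.HasTemperateGrowth) :
    (deriv f).HasTemperateGrowth := by
  simpa only [lineDeriv_one] using hasTemperateGrowth_lineDeriv hf 1

theorem hasTemperateGrowth_iteratedDeriv {f : ℝ → F} (hf : f.HasTemperateGrowth) (n : ℕ) :
    (iteratedDeriv n f).HasTemperateGrowth := by
  induction n with
  | zero => simpa using hf
  | succ n ih => simpa [iteratedDeriv_succ] using hasTemperateGrowth_deriv ih

theorem hasTemperateGrowth_of_hasDerivAt {f f' : ℝ → F} {k : ℕ} {C : ℝ}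
    (hf' : f'.HasTemperateGrowth) (hderiv : ∀ x, HasDerivAt f (f' x) x)
    (hbound : ∀ x, ‖f x‖ ≤ C * (1 + ‖x‖) ^ k) : f.HasTemperateGrowth := by
  refine .of_fderiv ?_ (fun x => (hderiv x).differentiableAt) hbound
  have hfderiv : fderiv ℝ f = fun x => ContinuousLinearMap.toSpanSingletonCLE (𝕜 := ℝ) (f' x) := by
    ext x
    simp [(hderiv x).hasFDerivAt.fderiv]
  rw [hfderiv]
  exact (ContinuousLinearMap.toSpanSingletonCLE (𝕜 := ℝ)
    (E := F)).toContinuousLinearMap.hasTemperateGrowth.comp hf'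

theorem hasDerivAt_cexp_ofReal_mul_I {φ : ℝ → ℝ} {φ' x : ℝ} (hφ : HasDerivAt φ φ' x) :
    HasDerivAt (fun x => exp (φ x * I)) (exp (φ x * I) * (φ' * I)) x :=
  (hφ.ofReal_comp.mul_const I).cexp

theorem hasTemperateGrowth_cexp_ofReal_mul_I {φ : E → ℝ} (hφ : φ.HasTemperateGrowth) :
    (fun x => exp (φ x * I)).HasTemperateGrowth := by
  have hderiv (n : ℕ) :
      iteratedDeriv n (fun x : ℝ => exp (x * I)) = fun x : ℝ => I ^ n * exp (x * I) := by
    induction n with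
    | zero => simp
    | succ n ih =>
      ext x
      rw [iteratedDeriv_succ, ih,
        ((hasDerivAt_cexp_ofReal_mul_I (hasDerivAt_id' x)).const_mul _).deriv]
      push_cast
      ring
  have hexp : (fun x : ℝ => exp (x * I)).HasTemperateGrowth := by
    refine ⟨(ofRealCLM.contDiff.mul contDiff_const).cexp, fun n => ⟨0, 1, fun x => ?_⟩⟩
    simp [norm_iteratedFDeriv_eq_norm_iteratedDeriv, hderiv]
  exact hexp.comp hφ

end TemperateGrowth

section SchwartzLp

variable {𝕜 D G : Type*} [RCLike 𝕜] [NormedAddCommGroup D] [NormedSpace ℝ D] [MeasurableSpace D]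
  [OpensMeasurableSpace D] [SecondCountableTopology D] [NormedAddCommGroup G] [NormedSpace ℝ G]
  (f g : 𝓢(D, G)) (p : ENNReal) (μ : Measure D) [μ.HasTemperateGrowth]

theorem norm_toLp_sub_le [Fact (1 ≤ p)] :
    ‖(f - g).toLp p μ‖ ≤ ‖f.toLp p μ‖ + ‖g.toLp p μ‖ :=
  norm_sub_le (f.toLp p μ) (g.toLp p μ)

variable [NormedSpace 𝕜 G]

theorem norm_toLp_smul [SMulCommClass ℝ 𝕜 G] [Fact (1 ≤ p)] (c : 𝕜) :
    ‖(c • f).toLp p μ‖ = ‖c‖ * ‖f.toLp p μ‖ :=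
  norm_smul c (f.toLp p μ)

theorem norm_toLp_smulLeftCLM_le {u : D → 𝕜} (hu : u.HasTemperateGrowth) {M : ℝ}
    (hM : ∀ x, ‖u x‖ ≤ M) :
    ‖(smulLeftCLM G u f).toLp p μ‖ ≤ M * ‖f.toLp p μ‖ := by
  refine Lp.norm_le_mul_norm_of_ae_le_mul ?_
  filter_upwards [coeFn_toLp (smulLeftCLM G u f) p μ, coeFn_toLp f p μ] with x hx hfx
  rw [hx, hfx, smulLeftCLM_apply_apply hu, norm_smul]
  gcongr
  exact hM x

end SchwartzLp

section FourierMultiplier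

variable {E F : Type*} [NormedAddCommGroup E] [InnerProductSpace ℝ E] [FiniteDimensional ℝ E]
  [MeasurableSpace E] [BorelSpace E]

theorem norm_toLp_fourierMultiplierCLM_le [NormedAddCommGroup F] [InnerProductSpace ℂ F]
    [CompleteSpace F] {u : E → ℂ} (hu : u.HasTemperateGrowth) {M : ℝ} (hM : ∀ ξ, ‖u ξ‖ ≤ M)
    (f : 𝓢(E, F)) : ‖(fourierMultiplierCLM F u f).toLp 2‖ ≤ M * ‖f.toLp 2‖ := by
  have hfourier : 𝓕 (fourierMultiplierCLM F u f) = smulLeftCLM F u (𝓕 f) :=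
    FourierTransform.fourier_fourierInv_eq _
  rw [← norm_fourier_toL2_eq, hfourier, ← norm_fourier_toL2_eq f]
  exact norm_toLp_smulLeftCLM_le (𝓕 f) 2 volume hu hM

variable [NormedAddCommGroup F] [NormedSpace ℂ F]

theorem lineDerivOp_smulLeftCLM {D : Type*} [NormedAddCommGroup D] [NormedSpace ℝ D]
    {u : D → ℂ} (hu : u.HasTemperateGrowth) (v : D) (f : 𝓢(D, F)) :
    ∂_{v} (smulLeftCLM F u f) =
      smulLeftCLM F u (∂_{v} f) + smulLeftCLM F (fun x => lineDeriv ℝ u x v) f := by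
  ext x
  have hux : DifferentiableAt ℝ u x := hu.1.differentiable (by simp) x
  simp only [lineDerivOp_apply_eq_fderiv, smulLeftCLM_apply hu, add_apply,
    smulLeftCLM_apply_apply hu, smulLeftCLM_apply_apply (hasTemperateGrowth_lineDeriv hu v),
    hux.lineDeriv_eq_fderiv]
  rw [fderiv_fun_smul hux f.differentiableAt]
  simp

theorem fourierMultiplierCLM_lineDeriv {u : E → ℂ} (hu : u.HasTemperateGrowth)
    (v : E) (f : 𝓢(E, F)) :
    fourierMultiplierCLM F (fun ξ => lineDeriv ℝ u ξ v) f =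
      (2 * Real.pi * I) • (fourierMultiplierCLM F u (smulLeftCLM F (inner ℝ · v) f) -
        smulLeftCLM F (inner ℝ · v) (fourierMultiplierCLM F u f)) := by
  have hprod := congrArg (𝓕⁻ ·) (lineDerivOp_smulLeftCLM hu v (𝓕 f))
  simp only [fourierInv_lineDerivOp_eq, lineDerivOp_fourier_eq, FourierTransform.fourierInv_add,
    FourierTransform.fourier_smul, FourierTransform.fourierInv_smul, map_smul,
    ← fourierMultiplierCLM_apply] at hprod
  rw [smul_sub, eq_sub_iff_add_eq]
  rw [neg_smul, neg_smul, neg_eq_iff_eq_neg] at hprod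
  rw [hprod]
  abel

end FourierMultiplier

section JapaneseBracket

theorem jap_pos (x : ℝ) : 0 < jap x := Real.sqrt_pos.2 (by positivity)

theorem jap_sq (x : ℝ) : jap x ^ 2 = 1 + x ^ 2 := Real.sq_sqrt (by positivity)

theorem jap_neg (x : ℝ) : jap (-x) = jap x := by simp only [jap, neg_sq]

theorem one_le_jap (x : ℝ) : 1 ≤ jap x := Real.one_le_sqrt.2 (by linarith [sq_nonneg x])

theorem abs_le_jap (x : ℝ) : |x| ≤ jap x := Real.abs_le_sqrt (by linarith)

theorem jap_le_one_add_abs (x : ℝ) : jap x ≤ 1 + |x| :=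
  Real.sqrt_le_iff.2 ⟨by positivity, by nlinarith [abs_nonneg x, sq_abs x]⟩

theorem hasDerivAt_jap (x : ℝ) : HasDerivAt jap (x / jap x) x := by
  have h := (((hasDerivAt_id' x).pow 2).const_add 1).sqrt (by positivity : 1 + x ^ 2 ≠ 0)
  refine h.congr_deriv ?_
  simp only [Pi.pow_apply, jap]
  field_simp
  norm_num

theorem hasDerivAt_div_jap (x : ℝ) : HasDerivAt (fun x => x / jap x) (1 / jap x ^ 3) x := by
  have hx := (jap_pos x).ne'
  refine ((hasDerivAt_id' x).div (hasDerivAt_jap x) hx).congr_deriv ?_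
  field_simp
  linear_combination jap_sq x

theorem hasTemperateGrowth_jap_rpow (r : ℝ) : (fun x => jap x ^ r).HasTemperateGrowth := by
  have hjap : (fun x => jap x ^ r) = fun x : ℝ => (1 + ‖x‖ ^ 2) ^ (r / 2) := by
    ext x
    rw [jap, Real.sqrt_eq_rpow, ← Real.rpow_mul (by positivity), Real.norm_eq_abs, sq_abs]
    ring_nf
  rw [hjap]
  exact hasTemperateGrowth_one_add_norm_sq_rpow ℝ (r / 2)

end JapaneseBracket

section Multiplier

theorem L2C_eq_norm_toLp (f : 𝓢(ℝ, ℂ)) : L2C f = ‖f.toLp 2‖ := by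
  rw [norm_toLp' two_ne_zero ENNReal.ofNat_ne_top, L2C, Real.sqrt_eq_rpow]
  norm_num

theorem FT_eq_fourier (h : ℝ → ℂ) (ξ : ℝ) :
    FT h ξ = (√(2 * Real.pi) : ℂ)⁻¹ * 𝓕 h ((2 * Real.pi)⁻¹ * ξ) := by
  simp only [FT, Real.fourier_real_eq_integral_exp_smul, smul_eq_mul]
  congr! 4 with x
  push_cast
  field_simp

theorem Mop_eq_fourierInv (m h : ℝ → ℂ) :
    Mop m h = 𝓕⁻ (fun ξ => m (2 * Real.pi * ξ) * 𝓕 h ξ) := by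
  ext x
  let g (ξ : ℝ) : ℂ := exp (I * x * ξ) * (m ξ * 𝓕 h ((2 * Real.pi)⁻¹ * ξ))
  have hsqrt : (√(2 * Real.pi) : ℂ)⁻¹ * (√(2 * Real.pi) : ℂ)⁻¹ = ((2 * Real.pi)⁻¹ : ℝ) := by
    rw [← mul_inv, ← ofReal_mul, Real.mul_self_sqrt (by positivity), ofReal_inv]
  calc Mop m h x
      = ∫ ξ, (√(2 * Real.pi) : ℂ)⁻¹ * (√(2 * Real.pi) : ℂ)⁻¹ * g ξ := by
        simp only [Mop, IFT, FT_eq_fourier, ← integral_const_mul]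
        congr! 2
        ring
    _ = (2 * Real.pi)⁻¹ • ∫ ξ, g ξ := by rw [integral_const_mul, hsqrt, real_smul]
    _ = ∫ ξ, g (2 * Real.pi * ξ) := by
        rw [Measure.integral_comp_mul_left, abs_of_pos (by positivity)]
    _ = 𝓕⁻ (fun ξ => m (2 * Real.pi * ξ) * 𝓕 h ξ) x := by
        rw [Real.fourierInv_eq']
        congr! 2 with ξ
        simp only [g, inv_mul_cancel_left₀ Real.two_pi_pos.ne', smul_eq_mul,
          RCLike.inner_apply, conj_trivial]
        push_cast
        ring_nf

/-- The Fourier multiplier `m(D)` on Schwartz functions, in the angular-frequency convention of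
`Mop`; the factor `2π` converts from Mathlib's normalization of the Fourier transform. The value is
meaningful only for `m` of temperate growth. -/
noncomputable def multiplierCLM (m : ℝ → ℂ) : 𝓢(ℝ, ℂ) →L[ℂ] 𝓢(ℝ, ℂ) :=
  fourierMultiplierCLM ℂ (fun ξ => m (2 * Real.pi * ξ))

variable {u : ℝ → ℂ}

theorem hasTemperateGrowth_comp_mul_left (hu : u.HasTemperateGrowth) (c : ℝ) :
    (fun ξ => u (c * ξ)).HasTemperateGrowth :=
  hu.comp (by fun_prop)

theorem coe_multiplierCLM (hu : u.HasTemperateGrowth) (f : 𝓢(ℝ, ℂ)) :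
    ⇑(multiplierCLM u f) = Mop u f := by
  rw [multiplierCLM, fourierMultiplierCLM_apply, fourierInv_coe, Mop_eq_fourierInv,
    smulLeftCLM_apply (hasTemperateGrowth_comp_mul_left hu _), fourier_coe]
  rfl

theorem norm_toLp_multiplierCLM_le (hu : u.HasTemperateGrowth) {M : ℝ} (hM : ∀ ξ, ‖u ξ‖ ≤ M)
    (f : 𝓢(ℝ, ℂ)) : ‖(multiplierCLM u f).toLp 2‖ ≤ M * ‖f.toLp 2‖ :=
  norm_toLp_fourierMultiplierCLM_le (hasTemperateGrowth_comp_mul_left hu _) (fun _ => hM _) f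

theorem multiplierCLM_deriv (hu : u.HasTemperateGrowth) (f : 𝓢(ℝ, ℂ)) :
    multiplierCLM (deriv u) f =
      I • (multiplierCLM u (smulLeftCLM ℂ ofReal f) -
        smulLeftCLM ℂ ofReal (multiplierCLM u f)) := by
  have hmul (g : 𝓢(ℝ, ℂ)) : smulLeftCLM ℂ (inner ℝ · (1 : ℝ)) g = smulLeftCLM ℂ ofReal g := by
    ext x
    rw [smulLeftCLM_apply_apply (by fun_prop), smulLeftCLM_apply_apply (by fun_prop)]
    simp
  have hderiv : (fun ξ => lineDeriv ℝ (fun ξ => u (2 * Real.pi * ξ)) ξ 1) =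
      (2 * Real.pi : ℂ) • fun ξ => deriv u (2 * Real.pi * ξ) := by
    ext ξ
    simp [lineDeriv_one, deriv_comp_mul_left]
  have h := fourierMultiplierCLM_lineDeriv (hasTemperateGrowth_comp_mul_left hu (2 * Real.pi)) 1 f
  rw [hderiv, fourierMultiplierCLM_smul
    (hasTemperateGrowth_comp_mul_left (hasTemperateGrowth_deriv hu) _)] at h
  simp only [hmul, mul_smul (_ * _) I] at h
  exact smul_right_injective _ (by simp [Real.pi_ne_zero] : (2 * Real.pi : ℂ) ≠ 0) h

theorem norm_toLp_weighted_multiplierCLM_le (hu : u.HasTemperateGrowth) {M : ℝ}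
    (hM : ∀ ξ, ‖u ξ‖ ≤ M) {w v : ℝ → ℂ} (hw : w.HasTemperateGrowth)
    (hv : v.HasTemperateGrowth) (hw_le : ∀ x, ‖w x‖ ≤ 1) (hv_le : ∀ x, ‖v x‖ ≤ 1) (f : 𝓢(ℝ, ℂ)) :
    ‖(smulLeftCLM ℂ w (multiplierCLM u (smulLeftCLM ℂ v f))).toLp 2‖ ≤ M * ‖f.toLp 2‖ := by
  have hM_nonneg : 0 ≤ M := (norm_nonneg _).trans (hM 0)
  refine (norm_toLp_smulLeftCLM_le _ 2 volume hw hw_le).trans ?_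
  rw [one_mul]
  refine (norm_toLp_multiplierCLM_le hu hM _).trans ?_
  gcongr M * ?_
  simpa only [one_mul] using norm_toLp_smulLeftCLM_le f 2 volume hv hv_le

theorem smulLeftCLM_multiplierCLM_deriv (hu : u.HasTemperateGrowth) {w v : ℝ → ℂ}
    (hw : w.HasTemperateGrowth) (hv : v.HasTemperateGrowth) (f : 𝓢(ℝ, ℂ)) :
    smulLeftCLM ℂ w (multiplierCLM (deriv u) (smulLeftCLM ℂ v f)) =
      I • (smulLeftCLM ℂ w (multiplierCLM u (smulLeftCLM ℂ (ofReal * v) f)) -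
        smulLeftCLM ℂ (w * ofReal) (multiplierCLM u (smulLeftCLM ℂ v f))) := by
  rw [multiplierCLM_deriv hu, map_smul, map_sub, smulLeftCLM_smulLeftCLM_apply (by fun_prop) hv,
    smulLeftCLM_smulLeftCLM_apply hw (by fun_prop)]

theorem norm_toLp_weighted_multiplierCLM_iteratedDeriv_le (hu : u.HasTemperateGrowth) {M : ℝ}
    (hM : ∀ ξ, ‖u ξ‖ ≤ M) (k : ℕ) {w v : ℝ → ℂ} (hw : w.HasTemperateGrowth)
    (hv : v.HasTemperateGrowth) (hw_le : ∀ x, jap x ^ k * ‖w x‖ ≤ 1)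
    (hv_le : ∀ x, jap x ^ k * ‖v x‖ ≤ 1) (f : 𝓢(ℝ, ℂ)) :
    ‖(smulLeftCLM ℂ w (multiplierCLM (iteratedDeriv k u) (smulLeftCLM ℂ v f))).toLp 2‖ ≤
      2 ^ k * M * ‖f.toLp 2‖ := by
  induction k generalizing w v with
  | zero =>
    simp only [pow_zero, one_mul, iteratedDeriv_zero] at hw_le hv_le ⊢
    exact norm_toLp_weighted_multiplierCLM_le hu hM hw hv hw_le hv_le f
  | succ k ih =>
    have weaken {z : ℝ → ℂ} (hz : ∀ x, jap x ^ (k + 1) * ‖z x‖ ≤ 1) (x : ℝ) :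
        jap x ^ k * ‖z x‖ ≤ 1 := by
      refine le_trans ?_ (hz x)
      gcongr
      exacts [one_le_jap x, k.le_succ]
    have weaken_ofReal {z : ℝ → ℂ} (hz : ∀ x, jap x ^ (k + 1) * ‖z x‖ ≤ 1) (x : ℝ) :
        jap x ^ k * (|x| * ‖z x‖) ≤ 1 := by
      refine le_trans ?_ (hz x)
      rw [pow_succ, mul_assoc]
      gcongr
      exacts [pow_nonneg (jap_pos x).le k, abs_le_jap x]
    have hleft := ih (v := ofReal * v) hw (.mul (by fun_prop) hv) (weaken hw_le)
      (fun x => by simpa using weaken_ofReal hv_le x)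
    have hright := ih (w := w * ofReal) (.mul hw (by fun_prop)) hv
      (fun x => by simpa [mul_comm] using weaken_ofReal hw_le x) (weaken hv_le)
    rw [iteratedDeriv_succ,
      smulLeftCLM_multiplierCLM_deriv (hasTemperateGrowth_iteratedDeriv hu k) hw hv]
    set g := smulLeftCLM ℂ w (multiplierCLM (iteratedDeriv k u) (smulLeftCLM ℂ (ofReal * v) f))
    set h := smulLeftCLM ℂ (w * ofReal) (multiplierCLM (iteratedDeriv k u) (smulLeftCLM ℂ v f))
    rw [norm_toLp_smul, norm_I, one_mul]
    linear_combination norm_toLp_sub_le g h 2 volume + hleft + hright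

end Multiplier

section OscillatoryIntegral

section BoundedVariation

variable {ψ ψ' : ℝ → ℝ} {α β : ℝ}

theorem intervalIntegrable_of_hasDerivAt_of_nonpos (hψ : ∀ x ∈ uIcc α β, HasDerivAt ψ (ψ' x) x)
    (hψ' : ∀ x ∈ uIcc α β, ψ' x ≤ 0) : IntervalIntegrable ψ' volume α β := by
  have hneg : IntervalIntegrable (fun x => -ψ' x) volume α β :=
    intervalIntegral.intervalIntegrable_deriv_of_nonneg (g := fun x => -ψ x)
      (fun x hx => (hψ x hx).continuousAt.neg.continuousWithinAt)
      (fun x hx => (hψ x (Ioo_subset_Icc_self hx)).neg)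
      (fun x hx => neg_nonneg.2 (hψ' x (Ioo_subset_Icc_self hx)))
  simpa only [Pi.neg_def, neg_neg] using hneg.neg

variable {F : Type*} [NormedAddCommGroup F] [NormedSpace ℝ F] {G G' : ℝ → F} {M : ℝ}

theorem norm_integral_deriv_smul_le (hαβ : α ≤ β) (hψ : ∀ x ∈ Icc α β, HasDerivAt ψ (ψ' x) x)
    (hψ' : ∀ x ∈ Icc α β, ψ' x ≤ 0) (hGM : ∀ x ∈ Icc α β, ‖G x‖ ≤ M) :
    ‖∫ x in α..β, ψ' x • G x‖ ≤ M * (ψ α - ψ β) := by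
  rw [← uIcc_of_le hαβ] at hψ hψ' hGM
  have hint := intervalIntegrable_of_hasDerivAt_of_nonpos hψ hψ'
  rw [← neg_sub (ψ β), ← intervalIntegral.integral_eq_sub_of_hasDerivAt hψ hint,
    ← intervalIntegral.integral_neg, ← intervalIntegral.integral_const_mul]
  refine intervalIntegral.norm_integral_le_of_norm_le hαβ (.of_forall fun x hx => ?_)
    (hint.neg.const_mul M)
  have hx : x ∈ uIcc α β := uIoc_subset_uIcc (uIoc_of_le hαβ ▸ hx)
  rw [norm_smul, Real.norm_of_nonpos (hψ' x hx), mul_comm]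
  gcongr
  exacts [neg_nonneg.2 (hψ' x hx), hGM x hx]

theorem norm_integral_smul_deriv_le [CompleteSpace F] (hαβ : α ≤ β)
    (hψ : ∀ x ∈ Icc α β, HasDerivAt ψ (ψ' x) x) (hψ' : ∀ x ∈ Icc α β, ψ' x ≤ 0) (hψβ : 0 ≤ ψ β)
    (hG : ∀ x ∈ Icc α β, HasDerivAt G (G' x) x) (hG' : IntervalIntegrable G' volume α β)
    (hGM : ∀ x ∈ Icc α β, ‖G x‖ ≤ M) :
    ‖∫ x in α..β, ψ x • G' x‖ ≤ 2 * M * ψ α := by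
  have hψ_le : ψ β ≤ ψ α :=
    antitoneOn_of_hasDerivWithinAt_nonpos (convex_Icc α β)
      (fun x hx => (hψ x hx).continuousAt.continuousWithinAt)
      (fun x hx => (hψ x (interior_subset hx)).hasDerivWithinAt)
      (fun x hx => hψ' x (interior_subset hx)) (left_mem_Icc.2 hαβ) (right_mem_Icc.2 hαβ) hαβ
  have hψG {x : ℝ} (hx : x ∈ Icc α β) (hψx : 0 ≤ ψ x) : ‖ψ x • G x‖ ≤ M * ψ x := by
    rw [norm_smul, Real.norm_of_nonneg hψx, mul_comm]
    gcongr
    exact hGM x hx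
  have hremainder := norm_integral_deriv_smul_le hαβ hψ hψ' hGM
  rw [← uIcc_of_le hαβ] at hψ hψ' hG
  rw [intervalIntegral.integral_smul_deriv_eq_deriv_smul hψ hG
    (intervalIntegrable_of_hasDerivAt_of_nonpos hψ hψ') hG']
  calc ‖ψ β • G β - ψ α • G α - ∫ x in α..β, ψ' x • G x‖
      ≤ ‖ψ β • G β‖ + ‖ψ α • G α‖ + ‖∫ x in α..β, ψ' x • G x‖ :=
        (norm_sub_le _ _).trans (by gcongr; exact norm_sub_le _ _)
    _ ≤ M * ψ β + M * ψ α + M * (ψ α - ψ β) := by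
        gcongr
        exacts [hψG (right_mem_Icc.2 hαβ) hψβ, hψG (left_mem_Icc.2 hαβ) (hψβ.trans hψ_le)]
    _ = 2 * M * ψ α := by ring

end BoundedVariation

theorem abs_mul_norm_integral_cexp_le {φ φ' φ'' : ℝ → ℝ} {α β : ℝ} (a : ℝ) (hαβ : α ≤ β)
    (hφ : ∀ x ∈ Icc α β, HasDerivAt φ (φ' x) x) (hφ' : ∀ x ∈ Icc α β, HasDerivAt φ' (φ'' x) x)
    (hφ'_pos : ∀ x ∈ Icc α β, 0 < φ' x) (hφ''_nonneg : ∀ x ∈ Icc α β, 0 ≤ φ'' x) :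
    |a| * ‖∫ x in α..β, exp ((a * φ x : ℝ) * I)‖ ≤ 2 / φ' α := by
  have hexp (x : ℝ) (hx : x ∈ Icc α β) := hasDerivAt_cexp_ofReal_mul_I ((hφ x hx).const_mul a)
  have hinv (x : ℝ) (hx : x ∈ Icc α β) := (hφ' x hx).inv (hφ'_pos x hx).ne'
  have hint : IntervalIntegrable (fun x => exp ((a * φ x : ℝ) * I) * ((a * φ' x : ℝ) * I))
      volume α β := by
    refine ContinuousOn.intervalIntegrable fun x hx => ?_
    rw [uIcc_of_le hαβ] at hx
    exact ((hexp x hx).continuousAt.mul (((hφ' x hx).continuousAt.const_mul a).ofReal.mul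
      continuousAt_const)).continuousWithinAt
  calc |a| * ‖∫ x in α..β, exp ((a * φ x : ℝ) * I)‖
      = ‖∫ x in α..β, (φ' x)⁻¹ • (exp ((a * φ x : ℝ) * I) * ((a * φ' x : ℝ) * I))‖ := by
        rw [← Real.norm_eq_abs, ← norm_real, ← mul_one ‖(a : ℂ)‖, ← norm_I, ← norm_mul, ← norm_mul,
          ← intervalIntegral.integral_const_mul]
        congr 1
        refine intervalIntegral.integral_congr fun x hx => ?_
        rw [uIcc_of_le hαβ] at hx
        have hφ'x : (φ' x : ℂ) ≠ 0 := ofReal_ne_zero.2 (hφ'_pos x hx).ne'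
        simp only [real_smul]
        push_cast
        field_simp
    _ ≤ 2 * 1 * (φ' α)⁻¹ :=
        norm_integral_smul_deriv_le hαβ hinv
          (fun x hx => div_nonpos_of_nonpos_of_nonneg (neg_nonpos.2 (hφ''_nonneg x hx))
            (sq_nonneg _))
          (inv_nonneg.2 (hφ'_pos β (right_mem_Icc.2 hαβ)).le) hexp hint
          (fun x _ => (norm_exp_ofReal_mul_I _).le)
    _ = 2 / φ' α := by ring

end OscillatoryIntegral

section KleinGordon

/-- The symbol `e^{ia⟨ξ⟩}` of the Klein–Gordon propagator at time `a`. -/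
noncomputable def kleinGordonPhase (a ξ : ℝ) : ℂ := exp ((a * jap ξ : ℝ) * I)

/-- The symbol `(iξ/⟨ξ⟩) e^{ia⟨ξ⟩}` of `(∂ₓ/⟨∇⟩) e^{ia⟨∇⟩}`. -/
noncomputable def kleinGordonSymbol (a ξ : ℝ) : ℂ := I * ξ / jap ξ * kleinGordonPhase a ξ

/-- The antiderivative of the phase `e^{ia⟨ξ⟩}` vanishing at `ξ = 0`. -/
noncomputable def kleinGordonPrimitive (a ξ : ℝ) : ℂ := ∫ s in (0 : ℝ)..ξ, kleinGordonPhase a s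

theorem norm_kleinGordonPhase (a ξ : ℝ) : ‖kleinGordonPhase a ξ‖ = 1 :=
  norm_exp_ofReal_mul_I _

theorem norm_kleinGordonSymbol_le_one (a ξ : ℝ) : ‖kleinGordonSymbol a ξ‖ ≤ 1 := by
  rw [kleinGordonSymbol, norm_mul, norm_kleinGordonPhase, mul_one, norm_div, norm_mul, norm_I,
    one_mul, norm_real, norm_real, Real.norm_eq_abs, Real.norm_of_nonneg (jap_pos ξ).le]
  exact div_le_one_of_le₀ (abs_le_jap ξ) (jap_pos ξ).le

theorem hasDerivAt_kleinGordonPhase (a ξ : ℝ) :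
    HasDerivAt (kleinGordonPhase a) (a * kleinGordonSymbol a ξ) ξ := by
  refine (hasDerivAt_cexp_ofReal_mul_I ((hasDerivAt_jap ξ).const_mul a)).congr_deriv ?_
  rw [kleinGordonSymbol, kleinGordonPhase]
  push_cast
  ring

theorem continuous_kleinGordonPhase (a : ℝ) : Continuous (kleinGordonPhase a) :=
  continuous_iff_continuousAt.2 fun ξ => (hasDerivAt_kleinGordonPhase a ξ).continuousAt

theorem hasDerivAt_kleinGordonPrimitive (a ξ : ℝ) :
    HasDerivAt (kleinGordonPrimitive a) (kleinGordonPhase a ξ) ξ :=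
  (continuous_kleinGordonPhase a).integral_hasStrictDerivAt 0 ξ |>.hasDerivAt

theorem norm_kleinGordonPrimitive_le_abs (a ξ : ℝ) : ‖kleinGordonPrimitive a ξ‖ ≤ |ξ| := by
  simpa [kleinGordonPrimitive] using
    intervalIntegral.norm_integral_le_of_norm_le_const (a := 0) (b := ξ)
      fun s _ => (norm_kleinGordonPhase a s).le

theorem hasTemperateGrowth_jap : jap.HasTemperateGrowth := by
  simpa using hasTemperateGrowth_jap_rpow 1

theorem hasTemperateGrowth_kleinGordonPhase (a : ℝ) : (kleinGordonPhase a).HasTemperateGrowth :=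
  hasTemperateGrowth_cexp_ofReal_mul_I (.mul (.const a) hasTemperateGrowth_jap)

theorem hasTemperateGrowth_kleinGordonSymbol (a : ℝ) :
    (kleinGordonSymbol a).HasTemperateGrowth := by
  have hsymbol : kleinGordonSymbol a =
      fun ξ => I * ((deriv jap ξ : ℝ) : ℂ) * kleinGordonPhase a ξ := by
    ext ξ
    rw [kleinGordonSymbol, (hasDerivAt_jap ξ).deriv, ofReal_div, mul_div_assoc]
  rw [hsymbol]
  have := hasTemperateGrowth_deriv hasTemperateGrowth_jap
  have := hasTemperateGrowth_kleinGordonPhase a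
  fun_prop

theorem hasTemperateGrowth_kleinGordonPrimitive (a : ℝ) :
    (kleinGordonPrimitive a).HasTemperateGrowth :=
  hasTemperateGrowth_of_hasDerivAt (k := 1) (C := 1) (hasTemperateGrowth_kleinGordonPhase a)
    (hasDerivAt_kleinGordonPrimitive a) fun ξ => by
      rw [one_mul, pow_one, Real.norm_eq_abs]
      linarith [norm_kleinGordonPrimitive_le_abs a ξ]

theorem kleinGordonPrimitive_neg (a ξ : ℝ) :
    kleinGordonPrimitive a (-ξ) = -kleinGordonPrimitive a ξ := by
  have hphase (s : ℝ) : kleinGordonPhase a (-s) = kleinGordonPhase a s := by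
    rw [kleinGordonPhase, jap_neg, kleinGordonPhase]
  have h := intervalIntegral.integral_comp_neg (a := 0) (b := ξ) (kleinGordonPhase a)
  simp only [hphase, neg_zero] at h
  rw [kleinGordonPrimitive, kleinGordonPrimitive, h, intervalIntegral.integral_symm]

theorem abs_mul_norm_integral_kleinGordonPhase_le (a : ℝ) {δ ξ : ℝ} (hδ : 0 < δ) (hδξ : δ ≤ ξ) :
    |a| * ‖∫ s in δ..ξ, kleinGordonPhase a s‖ ≤ 2 * jap δ / δ := by
  rw [← div_div_eq_mul_div]
  exact abs_mul_norm_integral_cexp_le a hδξ (fun s _ => hasDerivAt_jap s)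
    (fun s _ => hasDerivAt_div_jap s) (fun s hs => div_pos (hδ.trans_le hs.1) (jap_pos s))
    (fun s _ => one_div_nonneg.2 (pow_nonneg (jap_pos s).le 3))

theorem norm_kleinGordonPrimitive_le_of_abs_mul_sq {a δ : ℝ} (hδ : 0 < δ) (hδ_le : δ ≤ 1)
    (haδ : |a| * δ ^ 2 = 1) (ξ : ℝ) : ‖kleinGordonPrimitive a ξ‖ ≤ 4 * δ := by
  wlog hξ : 0 ≤ ξ generalizing ξ
  · simpa only [kleinGordonPrimitive_neg, norm_neg] using this (-ξ) (by linarith)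
  have hnear {η : ℝ} (hη : 0 ≤ η) : ‖kleinGordonPrimitive a η‖ ≤ η :=
    (norm_kleinGordonPrimitive_le_abs a η).trans_eq (abs_of_nonneg hη)
  rcases le_total ξ δ with hξδ | hδξ
  · linarith [hnear hξ]
  have hsplit : kleinGordonPrimitive a ξ =
      kleinGordonPrimitive a δ + ∫ s in δ..ξ, kleinGordonPhase a s :=
    (intervalIntegral.integral_add_adjacent_intervals
      ((continuous_kleinGordonPhase a).intervalIntegrable 0 δ)
      ((continuous_kleinGordonPhase a).intervalIntegrable δ ξ)).symm
  have hjap : jap δ ≤ 3 / 2 := Real.sqrt_le_iff.2 ⟨by norm_num, by nlinarith⟩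
  have hfar : ‖∫ s in δ..ξ, kleinGordonPhase a s‖ ≤ 3 * δ :=
    calc ‖∫ s in δ..ξ, kleinGordonPhase a s‖
        = δ ^ 2 * (|a| * ‖∫ s in δ..ξ, kleinGordonPhase a s‖) := by
          rw [← mul_assoc, mul_comm (δ ^ 2), haδ, one_mul]
      _ ≤ δ ^ 2 * (2 * jap δ / δ) := by
          gcongr
          exact abs_mul_norm_integral_kleinGordonPhase_le a hδ hδξ
      _ = 2 * jap δ * δ := by field_simp
      _ ≤ 3 * δ := by gcongr; linarith
  calc ‖kleinGordonPrimitive a ξ‖ ≤ ‖kleinGordonPrimitive a δ‖ + _ := hsplit ▸ norm_add_le _ _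
    _ ≤ δ + 3 * δ := add_le_add (hnear hδ.le) hfar
    _ = 4 * δ := by ring

theorem norm_kleinGordonPrimitive_le {a : ℝ} (ha : 1 ≤ |a|) (ξ : ℝ) :
    ‖kleinGordonPrimitive a ξ‖ ≤ 4 * |a| ^ (-(1 : ℝ) / 2) := by
  have ha_pos : 0 < |a| := one_pos.trans_le ha
  refine norm_kleinGordonPrimitive_le_of_abs_mul_sq (by positivity)
    (Real.rpow_le_one_of_one_le_of_nonpos ha (by norm_num)) ?_ ξ
  rw [← Real.rpow_mul_natCast ha_pos.le, Nat.cast_ofNat, div_mul_cancel₀ _ two_ne_zero,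
    Real.rpow_neg_one, mul_inv_cancel₀ ha_pos.ne']

theorem iteratedDeriv_two_kleinGordonPrimitive {a : ℝ} (ha : a ≠ 0) :
    iteratedDeriv 2 (fun ξ => (a : ℂ)⁻¹ * kleinGordonPrimitive a ξ) = kleinGordonSymbol a := by
  ext ξ
  have hderiv : deriv (fun ξ => (a : ℂ)⁻¹ * kleinGordonPrimitive a ξ) =
      fun ξ => (a : ℂ)⁻¹ * kleinGordonPhase a ξ :=
    funext fun ξ => ((hasDerivAt_kleinGordonPrimitive a ξ).const_mul _).deriv
  rw [iteratedDeriv_succ, iteratedDeriv_one, hderiv,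
    ((hasDerivAt_kleinGordonPhase a ξ).const_mul _).deriv,
    inv_mul_cancel_left₀ (ofReal_ne_zero.2 ha)]

end KleinGordon

section LocalDecay

/-- The weight `⟨x⟩⁻²`, complex-valued so that it can act on `𝓢(ℝ, ℂ)`. -/
noncomputable def japWeight (x : ℝ) : ℂ := (jap x ^ (-(2 : ℝ)) : ℝ)

/-- The operator `⟨x⟩⁻² (∂ₓ/⟨∇⟩) e^{ia⟨∇⟩} ⟨x⟩⁻²` on Schwartz functions. -/
noncomputable def weightedPropagator (a : ℝ) : 𝓢(ℝ, ℂ) →L[ℂ] 𝓢(ℝ, ℂ) :=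
  smulLeftCLM ℂ japWeight ∘L multiplierCLM (kleinGordonSymbol a) ∘L smulLeftCLM ℂ japWeight

theorem hasTemperateGrowth_japWeight : japWeight.HasTemperateGrowth := by
  have := hasTemperateGrowth_jap_rpow (-2)
  unfold japWeight
  fun_prop

theorem jap_sq_mul_norm_japWeight (x : ℝ) : jap x ^ 2 * ‖japWeight x‖ = 1 := by
  rw [japWeight, norm_real, Real.norm_of_nonneg (Real.rpow_nonneg (jap_pos x).le _),
    Real.rpow_neg (jap_pos x).le, Real.rpow_two, mul_inv_cancel₀ (pow_pos (jap_pos x) 2).ne']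

theorem norm_japWeight_le_one (x : ℝ) : ‖japWeight x‖ ≤ 1 := by
  rw [← jap_sq_mul_norm_japWeight x]
  exact le_mul_of_one_le_left (norm_nonneg _) (one_le_pow₀ (one_le_jap x))

theorem coe_weightedPropagator (a : ℝ) (f : 𝓢(ℝ, ℂ)) :
    ⇑(weightedPropagator a f) =
      fun x => japWeight x * Mop (kleinGordonSymbol a) (fun z => japWeight z * f z) x := by
  have hinner : ⇑(smulLeftCLM ℂ japWeight f) = fun z => japWeight z * f z :=
    smulLeftCLM_apply hasTemperateGrowth_japWeight f
  rw [← hinner, ← coe_multiplierCLM (hasTemperateGrowth_kleinGordonSymbol a)]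
  exact smulLeftCLM_apply hasTemperateGrowth_japWeight _

theorem norm_toLp_weightedPropagator_le (a : ℝ) (f : 𝓢(ℝ, ℂ)) :
    ‖(weightedPropagator a f).toLp 2‖ ≤ ‖f.toLp 2‖ := by
  simpa only [one_mul] using! norm_toLp_weighted_multiplierCLM_le
    (hasTemperateGrowth_kleinGordonSymbol a) (norm_kleinGordonSymbol_le_one a)
    hasTemperateGrowth_japWeight hasTemperateGrowth_japWeight norm_japWeight_le_one
    norm_japWeight_le_one f

theorem norm_toLp_weightedPropagator_le_of_one_le_abs {a : ℝ} (ha : 1 ≤ |a|) (f : 𝓢(ℝ, ℂ)) :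
    ‖(weightedPropagator a f).toLp 2‖ ≤ 16 * |a| ^ (-(3 : ℝ) / 2) * ‖f.toLp 2‖ := by
  have ha_pos : 0 < |a| := one_pos.trans_le ha
  have hprimitive (ξ : ℝ) :
      ‖(a : ℂ)⁻¹ * kleinGordonPrimitive a ξ‖ ≤ 4 * |a| ^ (-(3 : ℝ) / 2) :=
    calc ‖(a : ℂ)⁻¹ * kleinGordonPrimitive a ξ‖ = |a| ^ (-1 : ℝ) * ‖kleinGordonPrimitive a ξ‖ := by
          rw [norm_mul, norm_inv, norm_real, Real.norm_eq_abs, Real.rpow_neg_one]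
      _ ≤ |a| ^ (-1 : ℝ) * (4 * |a| ^ (-(1 : ℝ) / 2)) := by
          gcongr
          exact norm_kleinGordonPrimitive_le ha ξ
      _ = 4 * |a| ^ (-(3 : ℝ) / 2) := by
          rw [mul_left_comm, ← Real.rpow_add ha_pos]
          norm_num
  have hweight (x : ℝ) := (jap_sq_mul_norm_japWeight x).le
  have h := norm_toLp_weighted_multiplierCLM_iteratedDeriv_le
    (u := fun ξ => (a : ℂ)⁻¹ * kleinGordonPrimitive a ξ)
    (.mul (.const (a : ℂ)⁻¹) (hasTemperateGrowth_kleinGordonPrimitive a)) hprimitive 2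
    hasTemperateGrowth_japWeight hasTemperateGrowth_japWeight hweight hweight f
  rw [iteratedDeriv_two_kleinGordonPrimitive (abs_pos.1 ha_pos)] at h
  exact h.trans_eq (by ring)

theorem rpow_le_four_mul_jap_rpow {t c : ℝ} (hc : 0 < c) (ht : jap t ≤ 2 * c) :
    c ^ (-(3 : ℝ) / 2) ≤ 4 * jap t ^ (-(3 : ℝ) / 2) := by
  have htwo : (2 : ℝ) ^ (-(2 : ℝ)) ≤ 2 ^ (-(3 : ℝ) / 2) :=
    Real.rpow_le_rpow_of_exponent_le one_le_two (by norm_num)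
  calc c ^ (-(3 : ℝ) / 2) = 4 * (2 ^ (-(2 : ℝ)) * c ^ (-(3 : ℝ) / 2)) := by
        rw [Real.rpow_neg zero_le_two, Real.rpow_two]
        ring
    _ ≤ 4 * (2 ^ (-(3 : ℝ) / 2) * c ^ (-(3 : ℝ) / 2)) := by gcongr
    _ = 4 * (2 * c) ^ (-(3 : ℝ) / 2) := by rw [Real.mul_rpow zero_le_two hc.le]
    _ ≤ 4 * jap t ^ (-(3 : ℝ) / 2) := by
        gcongr 4 * ?_
        exact Real.rpow_le_rpow_of_nonpos (jap_pos t) ht (by norm_num)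

theorem norm_toLp_weightedPropagator_le_jap_rpow (a : ℝ) (f : 𝓢(ℝ, ℂ)) :
    ‖(weightedPropagator a f).toLp 2‖ ≤ 64 * jap a ^ (-(3 : ℝ) / 2) * ‖f.toLp 2‖ := by
  have hf := norm_nonneg (f.toLp 2)
  have hjap := jap_le_one_add_abs a
  rcases le_total |a| 1 with ha | ha
  · have hone := rpow_le_four_mul_jap_rpow one_pos (by linarith : jap a ≤ 2 * 1)
    rw [Real.one_rpow] at hone
    refine (norm_toLp_weightedPropagator_le a f).trans (le_mul_of_one_le_left hf ?_)
    linarith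
  · have habs := rpow_le_four_mul_jap_rpow (one_pos.trans_le ha) (by linarith : jap a ≤ 2 * |a|)
    refine (norm_toLp_weightedPropagator_le_of_one_le_abs ha f).trans ?_
    gcongr ?_ * _
    linarith

end LocalDecay

/-- Improved pointwise-in-time local decay:
`‖⟨·⟩^{-2} (∂_x/⟨∇⟩) e^{±it⟨∇⟩} (⟨·⟩^{-2} f)‖_{L²} ≤ C ⟨t⟩^{-3/2} ‖f‖_{L²}`. -/
theorem local_decay_klein_gordon_derivative :
    ∃ C : ℝ, 1 ≤ C ∧
      ∀ σ : ℝ, (σ = 1 ∨ σ = -1) → ∀ (t : ℝ) (f : SchwartzMap ℝ ℂ),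
        L2C (fun x => ((jap x ^ (-(2 : ℝ)) : ℝ) : ℂ) *
            Mop (fun ξ => Complex.I * (ξ : ℂ) / (jap ξ : ℂ) *
                Complex.exp (Complex.I * (σ : ℂ) * (t : ℂ) * (jap ξ : ℂ)))
              (fun z => ((jap z ^ (-(2 : ℝ)) : ℝ) : ℂ) * f z) x)
          ≤ C * jap t ^ (-(3 : ℝ) / 2) * L2C (fun x => f x) := by
  refine ⟨64, by norm_num, fun σ hσ t f => ?_⟩
  have hjap : jap (σ * t) = jap t := by
    rcases hσ with rfl | rfl
    · rw [one_mul]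
    · rw [neg_one_mul, jap_neg]
  have hsymbol : (fun ξ : ℝ => I * ξ / jap ξ * exp (I * σ * t * jap ξ)) =
      kleinGordonSymbol (σ * t) := by
    ext ξ
    rw [kleinGordonSymbol, kleinGordonPhase]
    push_cast
    ring_nf
  have h := norm_toLp_weightedPropagator_le_jap_rpow (σ * t) f
  rw [← L2C_eq_norm_toLp, ← L2C_eq_norm_toLp, coe_weightedPropagator, hjap] at h
  rw [hsymbol]
  exact h
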